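/- arXiv:2404.06768 — 3 statements merged into one kernel-verified Lean document; each statement's English description precedes it below -/
import Mathlib

section
/- Let n = 2t be an even positive integer, s ≥ 1 an integer, and W_1, …, W_{2s} pairwise disjoint t-dimensional F_3-linear subspaces of F_3^n, with f the associated ternary partial-spread function. Then the F_3-linear map (α, w) ↦ c_{α,w} from F_3 × F_3^n to F_3^{3^n − 1} is injective; consequently C_f is an F_3-linear code of length 3^n − 1 and dimension n + 1, i.e. it has exactly 3^{n+1} codewords. -/
open Matrix Finset

/-!
A codeword `α f + w · x` vanishing on all nonzero `x` with `α ≠ 0` would exhibit `f` as a linear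
functional off the origin, and with `α = 0` it forces `w = 0`; so the encoding map is injective
exactly when `f` is not linear off the origin. A partial-spread function is not linear there: it
takes the same value `1` at `x` and `-x` for nonzero `x ∈ W₁`, while `1 ≠ -1`.
-/

section Semiring

variable {R ι : Type*} [Semiring R] [Fintype ι]

/-- `f` agrees with a linear functional at every nonzero vector. The value `f 0` is left free since
the codes below have no coordinate at the origin. -/
def IsLinearOffZero (f : (ι → R) → R) : Prop :=
  ∃ w : ι → R, ∀ x, x ≠ 0 → f x = w ⬝ᵥ x

theorem eq_zero_of_forall_ne_zero_dotProduct_eq_zero {w : ι → R}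
    (hw : ∀ x, x ≠ 0 → w ⬝ᵥ x = 0) : w = 0 := by
  refine dotProduct_eq_zero w fun x => ?_
  rcases eq_or_ne x 0 with rfl | hx
  · exact dotProduct_zero w
  · exact hw x hx

/-- The encoding map `(α, w) ↦ c_{α,w}` of the code of `f`, whose coordinates are indexed by the
nonzero vectors. -/
def functionCodeEncoder (f : (ι → R) → R) : R × (ι → R) →ₗ[R] ({x : ι → R // x ≠ 0} → R) where
  toFun p x := p.1 * f x + p.2 ⬝ᵥ x
  map_add' p q := by
    ext x
    simp only [Prod.fst_add, Prod.snd_add, add_mul, add_dotProduct, Pi.add_apply]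
    abel
  map_smul' a p := by
    ext x
    simp [mul_add, mul_assoc, smul_dotProduct]

theorem functionCodeEncoder_apply (f : (ι → R) → R) (p : R × (ι → R)) (x : {x : ι → R // x ≠ 0}) :
    functionCodeEncoder f p x = p.1 * f x + p.2 ⬝ᵥ x :=
  rfl

/-- The linear code `C_f` of `f`, as the image of its encoding map. -/
def functionCode (f : (ι → R) → R) : Submodule R ({x : ι → R // x ≠ 0} → R) :=
  LinearMap.range (functionCodeEncoder f)

theorem coe_functionCode (f : (ι → R) → R) :
    (functionCode f : Set ({x : ι → R // x ≠ 0} → R)) =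
      {c | ∃ (α : R) (w : ι → R), c = fun x => α * f x.1 + w ⬝ᵥ x.1} := by
  ext c
  simp only [functionCode, SetLike.mem_coe, LinearMap.mem_range, Prod.exists, Set.mem_ofPred_eq,
    eq_comm (a := c)]
  rfl

end Semiring

section Ring

variable {R ι : Type*} [Ring R] [Fintype ι] {f : (ι → R) → R}

theorem IsLinearOffZero.map_neg (hf : IsLinearOffZero f) {x : ι → R} (hx : x ≠ 0) :
    f (-x) = -f x := by
  obtain ⟨w, hw⟩ := hf
  rw [hw x hx, hw (-x) (neg_ne_zero.mpr hx), dotProduct_neg]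

theorem not_isLinearOffZero_of_const_on_submodule {U : Submodule R (ι → R)} (hU : U ≠ ⊥)
    {c : R} (hc : c ≠ -c) (hfU : ∀ x ∈ U, x ≠ 0 → f x = c) :
    ¬IsLinearOffZero f := by
  intro hf
  obtain ⟨x, hxU, hx⟩ := U.exists_mem_ne_zero_of_ne_bot hU
  apply hc
  calc c = f (-x) := (hfU (-x) (neg_mem hxU) (neg_ne_zero.mpr hx)).symm
    _ = -f x := hf.map_neg hx
    _ = -c := by rw [hfU x hxU hx]

end Ring

section DivisionRing

variable {K ι : Type*} [DivisionRing K] [Fintype ι] {f : (ι → K) → K}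

theorem IsLinearOffZero.of_mul_add_dotProduct_eq_zero {α : K} (hα : α ≠ 0) {w : ι → K}
    (h : ∀ x, x ≠ 0 → α * f x + w ⬝ᵥ x = 0) : IsLinearOffZero f := by
  refine ⟨-(α⁻¹ • w), fun x hx => ?_⟩
  rw [neg_dotProduct, smul_dotProduct, smul_eq_mul, ← mul_neg, eq_inv_mul_iff_mul_eq₀ hα]
  exact eq_neg_of_add_eq_zero_left (h x hx)

theorem functionCodeEncoder_injective_iff :
    Function.Injective (functionCodeEncoder f) ↔ ¬IsLinearOffZero f := by
  constructor
  · rintro hinj ⟨w, hw⟩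
    have encoder_eq_zero : functionCodeEncoder f (1, -w) = 0 := by
      ext x
      simp [functionCodeEncoder_apply, hw x x.2]
    have pair_eq_zero := (map_eq_zero_iff _ hinj).mp encoder_eq_zero
    exact one_ne_zero (congrArg Prod.fst pair_eq_zero)
  · intro hf
    refine (injective_iff_map_eq_zero _).mpr fun ⟨α, w⟩ h => ?_
    have vanishes : ∀ x, x ≠ 0 → α * f x + w ⬝ᵥ x = 0 := fun x hx => congrFun h ⟨x, hx⟩
    obtain rfl : α = 0 := by
      by_contra hα
      exact hf (.of_mul_add_dotProduct_eq_zero hα vanishes)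
    obtain rfl : w = 0 :=
      eq_zero_of_forall_ne_zero_dotProduct_eq_zero fun x hx => by simpa using vanishes x hx
    rfl

theorem finrank_functionCode (hf : ¬IsLinearOffZero f) :
    Module.finrank K (functionCode f) = Fintype.card ι + 1 := by
  rw [functionCode, LinearMap.finrank_range_of_inj (functionCodeEncoder_injective_iff.mpr hf),
    Module.finrank_prod, Module.finrank_self, Module.finrank_fintype_fun_eq_card, add_comm]

theorem stmt6_general [Fintype K] (hf : ¬IsLinearOffZero f) :
    Function.Injective (functionCodeEncoder f) ∧
      Nat.card (functionCode f) = Fintype.card K ^ (Fintype.card ι + 1) := by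
  refine ⟨functionCodeEncoder_injective_iff.mpr hf, ?_⟩
  rw [Module.natCard_eq_pow_finrank (K := K), finrank_functionCode hf, Nat.card_eq_fintype_card]

end DivisionRing

theorem stmt6 (t n s : ℕ) (ht : n = 2 * t) (ht1 : 1 ≤ t) (hs : 1 ≤ s)
    (W : Fin (2 * s) → Submodule (ZMod 3) (Fin n → ZMod 3))
    (hdim : ∀ k, Module.finrank (ZMod 3) (W k) = t)
    (hdisj : ∀ i j, i ≠ j → W i ⊓ W j = ⊥)
    (f : (Fin n → ZMod 3) → ZMod 3)
    (hf1 : ∀ (x : Fin n → ZMod 3) (k : Fin (2 * s)), x ≠ 0 → x ∈ W k → (k : ℕ) < s → f x = 1)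
    (hf2 : ∀ (x : Fin n → ZMod 3) (k : Fin (2 * s)), x ≠ 0 → x ∈ W k → s ≤ (k : ℕ) → f x = 2)
    (hf0 : ∀ x : Fin n → ZMod 3, (x = 0 ∨ ∀ k, x ∉ W k) → f x = 0)
    (C : Set ({x : Fin n → ZMod 3 // x ≠ 0} → ZMod 3))
    (hC : C = {c | ∃ (α : ZMod 3) (w : Fin n → ZMod 3),
      c = fun x => α * f x.1 + w ⬝ᵥ x.1})
    :
    Function.Injective (fun p : ZMod 3 × (Fin n → ZMod 3) =>
      fun x : {x : Fin n → ZMod 3 // x ≠ 0} => p.1 * f x.1 + p.2 ⬝ᵥ x.1) ∧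
    Nat.card C = 3 ^ (n + 1) := by
  have hW : W ⟨0, by omega⟩ ≠ ⊥ := Submodule.one_le_finrank_iff.mp ((hdim _).symm ▸ ht1)
  have hf : ¬IsLinearOffZero f :=
    not_isLinearOffZero_of_const_on_submodule hW (by decide) fun x hxW hx => hf1 x _ hx hxW hs
  obtain ⟨encoder_injective, card_code⟩ := stmt6_general hf
  rw [ZMod.card, Fintype.card_fin] at card_code
  rw [hC, ← coe_functionCode]
  exact ⟨encoder_injective, card_code⟩
end

section
/- Let n = 2t be an even positive integer, s ≥ 1 an integer, and W_1, …, W_s pairwise disjoint t-dimensional F_3-linear subspaces of F_3^n, with f the associated characteristic function. Then the real part of the Walsh transform of f satisfies: Re(f̂(0)) = 3^n − (3/2)s(3^t − 1); Re(f̂(w)) = (3/2)s for every w ∈ F_3^n with w ∉ W_k^⊥ for all 1 ≤ k ≤ s; and Re(f̂(w)) = (3/2)s − 3^{t+1}/2 for every nonzero w ∈ F_3^n with w ∈ W_k^⊥ for some 1 ≤ k ≤ s. -/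
open Matrix Finset

/-!
The members of a partial spread meet only in `0`, so the indicator of their union without `0` is
the sum of the indicators of the `W k`, each corrected at `0`. Hence the Walsh transform of this
indicator is the character sum over the whole space plus `ψ 1 - 1` times the sum over `k` of the
character sums over `W k` minus `1`. A character sum over a subspace is its cardinality or `0`,
according to whether the functional annihilates the subspace. Since two distinct members of
half-dimension span the space, a nonzero functional annihilates at most one of them.
-/

section Decomposition

variable {K V R ι : Type*} [CommRing K] [AddCommGroup V] [Module K V] [CommRing R]

/-- The characteristic function of the union of the submodules `W k` with the origin removed. -/
noncomputable def partialSpreadIndicator (W : ι → Submodule K V) : V → K :=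
  (⋃ k, (W k : Set V) \ {0}).indicator 1

theorem eq_partialSpreadIndicator {W : ι → Submodule K V} {f : V → K}
    (hf_one : ∀ x k, x ≠ 0 → x ∈ W k → f x = 1)
    (hf_zero : ∀ x, (x = 0 ∨ ∀ k, x ∉ W k) → f x = 0) : f = partialSpreadIndicator W := by
  funext x
  by_cases hx : x ∈ ⋃ k, (W k : Set V) \ {0}
  · obtain ⟨k, hxk, hx0⟩ := Set.mem_iUnion.mp hx
    rw [partialSpreadIndicator, Set.indicator_of_mem hx, hf_one x k hx0 hxk, Pi.one_apply]
  · rw [partialSpreadIndicator, Set.indicator_of_notMem hx]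
    refine hf_zero x (or_iff_not_imp_left.mpr fun hx0 k hxk ↦ hx ?_)
    exact Set.mem_iUnion.mpr ⟨k, hxk, hx0⟩

theorem addChar_partialSpreadIndicator_add (ψ : AddChar K R) (W : ι → Submodule K V) (g : V → K)
    (x : V) :
    ψ (partialSpreadIndicator W x + g x) =
      ψ (g x) + (ψ 1 - 1) * (⋃ k, (W k : Set V) \ {0}).indicator (fun y ↦ ψ (g y)) x := by
  by_cases hx : x ∈ ⋃ k, (W k : Set V) \ {0}
  · simp only [partialSpreadIndicator, Set.indicator_of_mem hx, Pi.one_apply,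
      AddChar.map_add_eq_mul]
    ring
  · simp [partialSpreadIndicator, Set.indicator_of_notMem hx]

theorem pairwise_disjoint_sdiff_zero {W : ι → Submodule K V}
    (hW : Pairwise (Function.onFun Disjoint W)) :
    Pairwise (Function.onFun Disjoint fun k ↦ (W k : Set V) \ {0}) := by
  refine fun i j hij ↦ Set.disjoint_left.mpr ?_
  rintro x ⟨hxi, hx0⟩ ⟨hxj, -⟩
  exact hx0 (Submodule.disjoint_def.mp (hW hij) x hxi hxj)

theorem disjoint_dualAnnihilator_of_codisjoint {U U' : Submodule K V} (h : Codisjoint U U') :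
    Disjoint U.dualAnnihilator U'.dualAnnihilator := by
  rw [disjoint_iff, ← Submodule.dualAnnihilator_sup_eq, h.eq_top, Submodule.dualAnnihilator_top]

variable [Fintype V]

/-- The Walsh transform of `f` with respect to the additive character `ψ`. Frequencies are linear
functionals; the functional `w ⬝ᵥ ·` plays the role of the vector `w`. -/
def walshTransform (ψ : AddChar K R) (f : V → K) (φ : Module.Dual K V) : R :=
  ∑ x, ψ (f x - φ x)

/-- The Fourier coefficient at `φ` of the indicator function of the submodule `U`. -/
noncomputable def submoduleFourier (ψ : AddChar K R) (U : Submodule K V) (φ : Module.Dual K V) :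
    R :=
  ∑ x, (U : Set V).indicator (fun x ↦ ψ (-φ x)) x

theorem submoduleFourier_top (ψ : AddChar K R) (φ : Module.Dual K V) :
    submoduleFourier ψ ⊤ φ = ∑ x, ψ (-φ x) := by
  simp [submoduleFourier]

theorem sum_indicator_sdiff_zero (ψ : AddChar K R) (U : Submodule K V) (φ : Module.Dual K V) :
    ∑ x, ((U : Set V) \ {0}).indicator (fun x ↦ ψ (-φ x)) x = submoduleFourier ψ U φ - 1 := by
  classical
  have hzero : ({0} : Set V) ⊆ U := Set.singleton_subset_iff.mpr U.zero_mem
  simp [Set.indicator_sdiff hzero, submoduleFourier, Set.indicator_singleton]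

theorem walshTransform_partialSpreadIndicator [Fintype ι] (ψ : AddChar K R)
    {W : ι → Submodule K V} (hW : Pairwise (Function.onFun Disjoint W)) (φ : Module.Dual K V) :
    walshTransform ψ (partialSpreadIndicator W) φ =
      submoduleFourier ψ ⊤ φ + (ψ 1 - 1) * ∑ k, (submoduleFourier ψ (W k) φ - 1) := by
  have hsplit (x : V) : (⋃ k, (W k : Set V) \ {0}).indicator (fun y ↦ ψ (-φ y)) x =
      ∑ k, ((W k : Set V) \ {0}).indicator (fun y ↦ ψ (-φ y)) x := by
    simpa using indicator_biUnion_apply univ (fun k ↦ (W k : Set V) \ {0})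
      ((pairwise_disjoint_sdiff_zero hW).set_pairwise _) x
  simp only [walshTransform, sub_eq_add_neg (partialSpreadIndicator W _),
    addChar_partialSpreadIndicator_add ψ W (fun x ↦ -φ x), hsplit, sum_add_distrib, ← mul_sum]
  rw [sum_comm, submoduleFourier_top]
  simp only [sum_indicator_sdiff_zero]

end Decomposition

section Field

variable {F V R ι : Type*} [Field F] [AddCommGroup V] [Module F V]

theorem exists_mem_addChar_ne_one {M : Type*} [CommMonoid M] {ψ : AddChar F M} (hψ : ψ ≠ 1)
    {U : Submodule F V} {φ : Module.Dual F V} (hφ : φ ∉ U.dualAnnihilator) :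
    ∃ x ∈ U, ψ (φ x) ≠ 1 := by
  obtain ⟨y, hyU, hφy⟩ : ∃ y ∈ U, φ y ≠ 0 := by
    simpa [Submodule.mem_dualAnnihilator] using hφ
  obtain ⟨a, ha⟩ := AddChar.ne_one_iff.mp hψ
  refine ⟨(a / φ y) • y, U.smul_mem _ hyU, ?_⟩
  rwa [map_smul, smul_eq_mul, div_mul_cancel₀ a hφy]

theorem notMem_dualAnnihilator_of_disjoint [FiniteDimensional F V] {U U' : Submodule F V}
    (hdim : Module.finrank F V ≤ Module.finrank F U + Module.finrank F U')
    (hdisj : Disjoint U U') {φ : Module.Dual F V} (hφ : φ ≠ 0) (hU : φ ∈ U.dualAnnihilator) :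
    φ ∉ U'.dualAnnihilator := fun hU' ↦
  hφ <| Submodule.disjoint_def.mp (disjoint_dualAnnihilator_of_codisjoint
    ((Submodule.isCompl_iff_disjoint U U' hdim).mpr hdisj).codisjoint) φ hU hU'

variable [Fintype V] [CommRing R]

theorem submoduleFourier_of_mem (ψ : AddChar F R) {U : Submodule F V} {φ : Module.Dual F V}
    (hφ : φ ∈ U.dualAnnihilator) :
    submoduleFourier ψ U φ = (Nat.card F : R) ^ Module.finrank F U := by
  classical
  have hone : (U : Set V).indicator (fun x ↦ ψ (-φ x)) = (U : Set V).indicator 1 :=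
    Set.indicator_congr fun x hx ↦ by
      simp [(Submodule.mem_dualAnnihilator φ).mp hφ x hx]
  rw [submoduleFourier, hone, ← Nat.cast_pow, ← Module.natCard_eq_pow_finrank]
  simp [Set.indicator_apply, Fintype.card_subtype]

variable [Fintype ι] {W : ι → Submodule F V} {t : ℕ}

theorem walshTransform_partialSpreadIndicator_zero (ψ : AddChar F R)
    (hdim : ∀ k, Module.finrank F (W k) = t) (hW : Pairwise (Function.onFun Disjoint W)) :
    walshTransform ψ (partialSpreadIndicator W) 0 =
      (Nat.card F : R) ^ Module.finrank F V +
        (ψ 1 - 1) * (Fintype.card ι * ((Nat.card F : R) ^ t - 1)) := by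
  simp [walshTransform_partialSpreadIndicator ψ hW,
    submoduleFourier_of_mem ψ (Submodule.zero_mem _), hdim, mul_sub]

variable [IsDomain R] {ψ : AddChar F R}

theorem submoduleFourier_of_notMem (hψ : ψ ≠ 1) {U : Submodule F V} {φ : Module.Dual F V}
    (hφ : φ ∉ U.dualAnnihilator) : submoduleFourier ψ U φ = 0 := by
  classical
  let χ : AddChar U R := ψ.compAddMonoidHom ((-φ).domRestrict U).toAddMonoidHom
  have hχ : χ ≠ 0 := by
    obtain ⟨x, hxU, hx⟩ := exists_mem_addChar_ne_one hψ (neg_mem_iff.not.mpr hφ)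
    exact AddChar.ne_one_iff.mpr ⟨⟨x, hxU⟩, hx⟩
  calc submoduleFourier ψ U φ = ∑ x : U, χ x := by
        simp only [submoduleFourier, Set.indicator_apply, SetLike.mem_coe, ← sum_filter]
        exact sum_subtype _ (by simp) _
    _ = 0 := by rw [AddChar.sum_eq_ite, if_neg hχ]

theorem submoduleFourier_top_of_ne_zero (hψ : ψ ≠ 1) {φ : Module.Dual F V} (hφ : φ ≠ 0) :
    submoduleFourier ψ ⊤ φ = 0 :=
  submoduleFourier_of_notMem hψ <| by simpa using hφ

theorem walshTransform_partialSpreadIndicator_of_forall_notMem [Nonempty ι] (hψ : ψ ≠ 1)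
    (hW : Pairwise (Function.onFun Disjoint W)) {φ : Module.Dual F V}
    (hφ : ∀ k, φ ∉ (W k).dualAnnihilator) :
    walshTransform ψ (partialSpreadIndicator W) φ = (ψ 1 - 1) * -Fintype.card ι := by
  have hφ0 : φ ≠ 0 := by
    rintro rfl
    exact hφ (Classical.arbitrary ι) (Submodule.zero_mem _)
  simp [walshTransform_partialSpreadIndicator ψ hW, submoduleFourier_top_of_ne_zero hψ hφ0,
    submoduleFourier_of_notMem hψ (hφ _)]

theorem walshTransform_partialSpreadIndicator_of_mem (hψ : ψ ≠ 1)
    (hn : Module.finrank F V ≤ 2 * t) (hdim : ∀ k, Module.finrank F (W k) = t)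
    (hW : Pairwise (Function.onFun Disjoint W)) {φ : Module.Dual F V} (hφ : φ ≠ 0) {k : ι}
    (hk : φ ∈ (W k).dualAnnihilator) :
    walshTransform ψ (partialSpreadIndicator W) φ =
      (ψ 1 - 1) * ((Nat.card F : R) ^ t - Fintype.card ι) := by
  have hother (j : ι) (hj : j ≠ k) : submoduleFourier ψ (W j) φ = 0 :=
    submoduleFourier_of_notMem hψ <|
      notMem_dualAnnihilator_of_disjoint (by rw [hdim, hdim]; lia) (hW hj.symm) hφ hk
  have hsum : ∑ j, submoduleFourier ψ (W j) φ = (Nat.card F : R) ^ t := by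
    rw [Fintype.sum_eq_single k hother, submoduleFourier_of_mem ψ hk, hdim]
  simp [walshTransform_partialSpreadIndicator ψ hW, submoduleFourier_top_of_ne_zero hψ hφ, hsum]

theorem stmt9_general [Nonempty ι] (hψ : ψ ≠ 1) (hn : Module.finrank F V = 2 * t)
    (hdim : ∀ k, Module.finrank F (W k) = t) (hW : Pairwise (Function.onFun Disjoint W)) :
    walshTransform ψ (partialSpreadIndicator W) 0 =
      (Nat.card F : R) ^ (2 * t) + (ψ 1 - 1) * (Fintype.card ι * ((Nat.card F : R) ^ t - 1)) ∧
    (∀ φ : Module.Dual F V, (∀ k, φ ∉ (W k).dualAnnihilator) →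
      walshTransform ψ (partialSpreadIndicator W) φ = (ψ 1 - 1) * -Fintype.card ι) ∧
    (∀ φ : Module.Dual F V, φ ≠ 0 → (∃ k, φ ∈ (W k).dualAnnihilator) →
      walshTransform ψ (partialSpreadIndicator W) φ =
        (ψ 1 - 1) * ((Nat.card F : R) ^ t - Fintype.card ι)) :=
  ⟨hn ▸ walshTransform_partialSpreadIndicator_zero ψ hdim hW,
    fun _ hφ ↦ walshTransform_partialSpreadIndicator_of_forall_notMem hψ hW hφ,
    fun _ hφ ⟨_, hk⟩ ↦ walshTransform_partialSpreadIndicator_of_mem hψ hn.le hdim hW hφ hk⟩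

end Field

theorem stdAddChar_eq_exp_pow_val {N : ℕ} [NeZero N] (a : ZMod N) :
    ZMod.stdAddChar a = Complex.exp (2 * Real.pi * Complex.I / N) ^ a.val := by
  have h := ZMod.stdAddChar_coe (N := N) a.val
  rw [Int.cast_natCast, ZMod.natCast_zmod_val] at h
  rw [h, ← Complex.exp_nat_mul]
  push_cast
  ring_nf

theorem walshTransform_stdAddChar_dotProductEquiv {N : ℕ} [NeZero N] {m : Type*} [Fintype m]
    [DecidableEq m] (f : (m → ZMod N) → ZMod N) (w : m → ZMod N) :
    walshTransform ZMod.stdAddChar f (dotProductEquiv (ZMod N) m w) =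
      ∑ x, Complex.exp (2 * Real.pi * Complex.I / N) ^ (f x - w ⬝ᵥ x).val := by
  simp [walshTransform, stdAddChar_eq_exp_pow_val]

theorem re_stdAddChar_one (N : ℕ) [NeZero N] :
    (ZMod.stdAddChar (1 : ZMod N)).re = Real.cos (2 * Real.pi / N) := by
  have hexp : ZMod.stdAddChar (1 : ZMod N) =
      Complex.exp ((2 * Real.pi / N : ℝ) * Complex.I) := by
    have h := ZMod.stdAddChar_coe (N := N) 1
    rw [Int.cast_one] at h
    rw [h]
    push_cast
    ring_nf
  rw [hexp, Complex.exp_ofReal_mul_I_re]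

theorem cos_two_pi_div_three : Real.cos (2 * Real.pi / 3) = -(1 / 2) := by
  rw [show 2 * Real.pi / 3 = Real.pi - Real.pi / 3 by ring, Real.cos_pi_sub,
    Real.cos_pi_div_three]

theorem re_stdAddChar_three_sub_one_mul {z : ℂ} (r : ℝ) (hz : z = r) :
    ((ZMod.stdAddChar (1 : ZMod 3) - 1) * z).re = -(3 / 2) * r := by
  rw [hz, Complex.re_mul_ofReal, Complex.sub_re, re_stdAddChar_one, Nat.cast_ofNat,
    cos_two_pi_div_three]
  norm_num

theorem stmt9 (t n s : ℕ) (ht : n = 2 * t) (ht1 : 1 ≤ t) (hs : 1 ≤ s)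
    (W : Fin s → Submodule (ZMod 3) (Fin n → ZMod 3))
    (hdim : ∀ k, Module.finrank (ZMod 3) (W k) = t)
    (hdisj : ∀ i j, i ≠ j → W i ⊓ W j = ⊥)
    (f : (Fin n → ZMod 3) → ZMod 3)
    (hf1 : ∀ (x : Fin n → ZMod 3) (k : Fin s), x ≠ 0 → x ∈ W k → f x = 1)
    (hf0 : ∀ x : Fin n → ZMod 3, (x = 0 ∨ ∀ k, x ∉ W k) → f x = 0)
    (walsh : (Fin n → ZMod 3) → ℂ)
    (hwalsh : ∀ w : Fin n → ZMod 3, walsh w = ∑ x : Fin n → ZMod 3,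
      Complex.exp (2 * Real.pi * Complex.I / 3) ^ ((f x - w ⬝ᵥ x).val))
    :
    (walsh 0).re = 3 ^ n - 3 / 2 * (s : ℝ) * (3 ^ t - 1) ∧
    (∀ w : Fin n → ZMod 3, (∀ k, ∃ x ∈ W k, w ⬝ᵥ x ≠ 0) → (walsh w).re = 3 / 2 * (s : ℝ)) ∧
    (∀ w : Fin n → ZMod 3, w ≠ 0 → (∃ k, ∀ x ∈ W k, w ⬝ᵥ x = 0) →
      (walsh w).re = 3 / 2 * (s : ℝ) - 3 ^ (t + 1) / 2) := by
  have : Nonempty (Fin s) := Fin.pos_iff_nonempty.mp hs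
  have hψ : ZMod.stdAddChar (N := 3) ≠ 1 := by
    simpa using ZMod.isPrimitive_stdAddChar 3 one_ne_zero
  obtain rfl := eq_partialSpreadIndicator hf1 hf0
  have hwalsh_eq (w) : walsh w = walshTransform ZMod.stdAddChar (partialSpreadIndicator W)
      (dotProductEquiv (ZMod 3) (Fin n) w) := by
    rw [hwalsh, walshTransform_stdAddChar_dotProductEquiv, Nat.cast_ofNat]
  obtain ⟨h_zero, h_notMem, h_mem⟩ := stmt9_general hψ (by simpa using ht) hdim
    fun i j hij ↦ disjoint_iff.mpr (hdisj i j hij)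
  simp only [Fintype.card_fin, Nat.card_zmod, Nat.cast_ofNat] at h_zero h_notMem h_mem
  refine ⟨?_, fun w hw ↦ ?_, fun w hw0 hw ↦ ?_⟩
  · have hpow : ((3 : ℂ) ^ n).re = 3 ^ n := by norm_cast
    rw [hwalsh_eq, map_zero, h_zero, ← ht, Complex.add_re, hpow,
      re_stdAddChar_three_sub_one_mul (s * (3 ^ t - 1)) (by simp)]
    ring
  · rw [hwalsh_eq, h_notMem _ (by simpa [Submodule.mem_dualAnnihilator] using hw),
      re_stdAddChar_three_sub_one_mul (-s) (by simp)]
    ring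
  · rw [hwalsh_eq,
      h_mem _ (by simpa using hw0) (by simpa [Submodule.mem_dualAnnihilator] using hw),
      re_stdAddChar_three_sub_one_mul (3 ^ t - s) (by simp)]
    ring
end

section
/- Let n = 2t be an even positive integer, s ≥ 1 an integer, and W_1, …, W_s pairwise disjoint t-dimensional F_3-linear subspaces of F_3^n, with f the associated characteristic function. Then the Hamming weights of the codewords c_{α,w} of C_f are: wt(c_{0,w}) = 2·3^{n−1} for every w ≠ 0; wt(c_{α,0}) = s(3^t − 1) for α ∈ {1, 2}; wt(c_{α,w}) = 2·3^{n−1} − s for α ∈ {1, 2} and every w with w ∉ W_k^⊥ for all 1 ≤ k ≤ s; and wt(c_{α,w}) = 2·3^{n−1} + 3^t − s for α ∈ {1, 2} and every nonzero w with w ∈ W_k^⊥ for some 1 ≤ k ≤ s. -/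
open Matrix Finset

/-!
Write `N` for the number of nonzero values. Adding `α ≠ 0` to a functional `φ` on a subspace `U`
does not change `N` when `φ` is nonzero on `U`, since it amounts to a translation of `U`, and raises
it by `|U|` when `φ` vanishes on `U`. The codeword differs from `φ` by exactly this modification on
each `W k`, except that the point `0`, where the modification would create a nonzero value, is left
out. The `W k` being disjoint away from `0`, the changes add up:
`wt(α f + φ) + s = wt(φ) + ∑ |W k|`, the sum running over those `k` with `φ ∈ (W k)^⊥`.
A nonzero `φ` annihilates at most one `W k`, as two of them span the whole space.
-/

section Counting

variable {X ι M : Type*} [Fintype X] [Zero M] [DecidableEq M]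

lemma hammingNorm_subtype {p : X → Prop} [DecidablePred p] {g : X → M}
    (hg : ∀ x, ¬ p x → g x = 0) :
    hammingNorm (fun x : {x // p x} ↦ g x) = hammingNorm g := by
  have hp : ∀ x, p x ∧ g x ≠ 0 ↔ g x ≠ 0 := fun x ↦ and_iff_right_of_imp fun hx ↦ by
    by_contra hpx
    exact hx (hg x hpx)
  calc hammingNorm (fun x : {x // p x} ↦ g x)
      = #(({x | g x ≠ 0} : Finset X).subtype p) := by
        unfold hammingNorm
        congr 1
        ext x
        simp
    _ = hammingNorm g := by
        simp only [card_subtype, filter_filter, and_comm, hp, hammingNorm]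

lemma hammingNorm_add_sum_card_filter_ne_zero [Fintype ι] {g h : X → M}
    {S : ι → Finset X} (hS : Pairwise fun i j ↦ Disjoint (S i) (S j))
    (hgh : ∀ x, (∀ k, x ∉ S k) → g x = h x) :
    hammingNorm g + ∑ k, #{x ∈ S k | h x ≠ 0} = hammingNorm h + ∑ k, #{x ∈ S k | g x ≠ 0} := by
  classical
  have sum_eq (f : X → M) :
      ∑ k, #{x ∈ S k | f x ≠ 0} = #{x ∈ univ.biUnion S | f x ≠ 0} := by
    rw [filter_biUnion, card_biUnion fun i _ j _ hij ↦ disjoint_filter_filter (hS hij)]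
  have split (f : X → M) :
      hammingNorm f =
        #{x ∈ univ.biUnion S | f x ≠ 0} + #{x ∈ (univ.biUnion S)ᶜ | f x ≠ 0} := by
    rw [← card_union_of_disjoint (disjoint_filter_filter disjoint_compl_right), ← filter_union,
      union_compl, hammingNorm]
  have compl_eq : {x ∈ (univ.biUnion S)ᶜ | g x ≠ 0} = {x ∈ (univ.biUnion S)ᶜ | h x ≠ 0} :=
    filter_congr fun x hx ↦ by rw [hgh x (by simpa using hx)]
  rw [sum_eq, sum_eq, split g, split h, compl_eq]
  ring

end Counting

section Functional

variable {K V : Type*} [Field K] [DecidableEq K] [AddCommGroup V] [Module K V] [Fintype V]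

lemma hammingNorm_dual {φ : Module.Dual K V} (hφ : φ ≠ 0) :
    hammingNorm φ = (Nat.card K - 1) * Nat.card K ^ (Module.finrank K V - 1) := by
  have finrank_ker := Module.Dual.finrank_ker_add_one_of_ne_zero hφ
  have card_ker : #{x | φ x = 0} = Nat.card K ^ (Module.finrank K V - 1) := by
    rw [← finrank_ker, Nat.add_sub_cancel, ← Module.natCard_eq_pow_finrank, ← Fintype.card_subtype,
      ← Nat.card_eq_fintype_card]
    rfl
  have card_V : Fintype.card V = Nat.card K * Nat.card K ^ (Module.finrank K V - 1) := by
    rw [← pow_succ', ← finrank_ker, Nat.add_sub_cancel, finrank_ker,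
      ← Module.natCard_eq_pow_finrank, Nat.card_eq_fintype_card]
  have split : #{x | φ x = 0} + hammingNorm φ = Fintype.card V :=
    card_filter_add_card_filter_not _
  rw [Nat.sub_one_mul, ← card_V, ← card_ker, ← split, Nat.add_sub_cancel_left]

variable (U : Submodule K V) [DecidablePred (· ∈ U)] {φ : Module.Dual K V}

lemma card_filter_const_add_ne_zero_of_notMem (hφ : φ ∉ U.dualAnnihilator) (α : K) :
    #{x | x ∈ U ∧ α + φ x ≠ 0} = #{x | x ∈ U ∧ φ x ≠ 0} := by
  obtain ⟨v, hvU, hv⟩ : ∃ v ∈ U, φ v ≠ 0 := by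
    simpa [Submodule.mem_dualAnnihilator] using hφ
  have hu : (α / φ v) • v ∈ U := U.smul_mem _ hvU
  refine card_equiv (Equiv.addRight ((α / φ v) • v)) fun x ↦ ?_
  simp [U.add_mem_iff_left hu, hv, add_comm α]

lemma card_filter_const_add_ne_zero_of_mem (hφ : φ ∈ U.dualAnnihilator) {α : K} (hα : α ≠ 0) :
    #{x | x ∈ U ∧ α + φ x ≠ 0} = Nat.card U := by
  rw [Submodule.mem_dualAnnihilator] at hφ
  have hU : ∀ x, x ∈ U ∧ α + φ x ≠ 0 ↔ x ∈ U := fun x ↦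
    and_iff_left_of_imp fun hx ↦ by rwa [hφ x hx, add_zero]
  simp only [hU, ← Fintype.card_subtype, Nat.card_eq_fintype_card]

lemma card_filter_erase_zero_const_add_ne_zero [DecidableEq V] [Decidable (φ ∈ U.dualAnnihilator)]
    {α : K} (hα : α ≠ 0) :
    #{x ∈ ({x | x ∈ U} : Finset V).erase 0 | α + φ x ≠ 0} + 1 =
      #{x ∈ ({x | x ∈ U} : Finset V).erase 0 | φ x ≠ 0} +
        if φ ∈ U.dualAnnihilator then Nat.card U else 0 := by
  rw [filter_erase, card_erase_add_one (by simp [hα]), filter_erase, erase_eq_of_notMem (by simp),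
    filter_filter, filter_filter]
  split_ifs with hφ
  · have hφU : ∀ x, ¬ (x ∈ U ∧ φ x ≠ 0) := by
      simpa [Submodule.mem_dualAnnihilator] using hφ
    simp [card_filter_const_add_ne_zero_of_mem U hφ hα, -ne_eq, hφU]
  · rw [card_filter_const_add_ne_zero_of_notMem U hφ, add_zero]

end Functional

lemma eq_zero_of_mem_dualAnnihilator_of_codisjoint {R M : Type*} [CommSemiring R]
    [AddCommMonoid M] [Module R M] {U U' : Submodule R M} (hUU' : Codisjoint U U')
    {φ : Module.Dual R M} (hU : φ ∈ U.dualAnnihilator) (hU' : φ ∈ U'.dualAnnihilator) : φ = 0 := by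
  have hφ : φ ∈ (U ⊔ U').dualAnnihilator := by
    rw [Submodule.dualAnnihilator_sup_eq]
    exact ⟨hU, hU'⟩
  simpa [hUU'.eq_top] using hφ

/-- `f` is the characteristic function of the union of the subspaces `W k` with the origin removed.
It is meant for partial spreads, i.e. families of subspaces meeting pairwise only in `0`. -/
structure IsSpreadIndicator {K V ι : Type*} [Semiring K] [AddCommMonoid V] [Module K V]
    (W : ι → Submodule K V) (f : V → K) : Prop where
  eq_one : ∀ x k, x ≠ 0 → x ∈ W k → f x = 1
  eq_zero : ∀ x, (x = 0 ∨ ∀ k, x ∉ W k) → f x = 0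

/-- The codeword `c_{α,φ}` of the code `C_f`, with coordinates indexed by the nonzero vectors; the
functional `φ` takes the place of `x ↦ w ⬝ᵥ x`. -/
def codeword {K V : Type*} [CommSemiring K] [AddCommMonoid V] [Module K V] (f : V → K) (α : K)
    (φ : Module.Dual K V) : {x : V // x ≠ 0} → K :=
  fun x ↦ α * f x + φ x

section Weights

variable {K V ι : Type*} [Field K] [DecidableEq K] [AddCommGroup V] [Module K V] [Fintype V]
  [DecidableEq V] {f : V → K} {α : K} {φ : Module.Dual K V}

lemma hammingNorm_codeword_zero : hammingNorm (codeword f 0 φ) = hammingNorm φ := by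
  have restrict : codeword f 0 φ = fun x : {x : V // x ≠ 0} ↦ φ x := by
    ext x
    simp [codeword]
  rw [restrict]
  exact hammingNorm_subtype (g := φ) (by simp)

variable [Fintype ι] {W : ι → Submodule K V}

lemma hammingNorm_codeword_add_card [DecidablePred fun k ↦ φ ∈ (W k).dualAnnihilator]
    (hW : Pairwise fun i j ↦ Disjoint (W i) (W j)) (hf : IsSpreadIndicator W f) (hα : α ≠ 0) :
    hammingNorm (codeword f α φ) + Fintype.card ι =
      hammingNorm φ + ∑ k with φ ∈ (W k).dualAnnihilator, Nat.card (W k) := by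
  classical
  let S (k : ι) : Finset V := ({x | x ∈ W k} : Finset V).erase 0
  have hS : Pairwise fun i j ↦ Disjoint (S i) (S j) := fun i j hij ↦
    disjoint_left.2 fun x hi hj ↦ by
      simp only [S, mem_erase, mem_filter, mem_univ, true_and] at hi hj
      exact hi.1 (Submodule.disjoint_def.1 (hW hij) x hi.2 hj.2)
  have outside : ∀ x, (∀ k, x ∉ S k) → α * f x + φ x = φ x := fun x hx ↦ by
    have hx' : x = 0 ∨ ∀ k, x ∉ W k := by
      simpa [S, or_iff_not_imp_left, forall_comm (β := ¬ x = 0)] using hx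
    rw [hf.eq_zero x hx', mul_zero, zero_add]
  have on_S (k : ι) : {x ∈ S k | α * f x + φ x ≠ 0} = {x ∈ S k | α + φ x ≠ 0} :=
    filter_congr fun x hx ↦ by
      simp only [S, mem_erase, mem_filter, mem_univ, true_and] at hx
      rw [hf.eq_one x k hx.1 hx.2, mul_one]
  have restrict : hammingNorm (codeword f α φ) = hammingNorm fun x ↦ α * f x + φ x :=
    hammingNorm_subtype (g := fun x ↦ α * f x + φ x) (by simp [hf.eq_zero 0 (.inl rfl)])
  have total : hammingNorm (codeword f α φ) + ∑ k, #{x ∈ S k | φ x ≠ 0} =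
      hammingNorm φ + ∑ k, #{x ∈ S k | α + φ x ≠ 0} := by
    rw [restrict, hammingNorm_add_sum_card_filter_ne_zero hS outside]
    simp only [on_S]
  have weight_change : ∑ k, (#{x ∈ S k | α + φ x ≠ 0} + 1) =
      ∑ k, (#{x ∈ S k | φ x ≠ 0} + if φ ∈ (W k).dualAnnihilator then Nat.card (W k) else 0) :=
    sum_congr rfl fun k _ ↦ card_filter_erase_zero_const_add_ne_zero (W k) hα
  simp only [sum_add_distrib, ← sum_filter, sum_const, card_univ, smul_eq_mul, mul_one]
    at weight_change
  lia

variable {t : ℕ}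

lemma hammingNorm_codeword_functional_zero (hdim : ∀ k, Module.finrank K (W k) = t)
    (hW : Pairwise fun i j ↦ Disjoint (W i) (W j)) (hf : IsSpreadIndicator W f) (hα : α ≠ 0) :
    hammingNorm (codeword f α 0) = Fintype.card ι * (Nat.card K ^ t - 1) := by
  classical
  have key := hammingNorm_codeword_add_card (φ := 0) hW hf hα
  have card_W (k : ι) : Nat.card (W k) = Nat.card K ^ t := by
    rw [Module.natCard_eq_pow_finrank (K := K), hdim]
  have hammingNorm_zero_functional : hammingNorm (0 : Module.Dual K V) = 0 := hammingNorm_zero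
  simp only [hammingNorm_zero_functional, Submodule.zero_mem, filter_true, zero_add, card_W,
    sum_const, card_univ, smul_eq_mul] at key
  rw [Nat.mul_sub_one]
  exact Nat.eq_sub_of_add_eq key

lemma hammingNorm_codeword_of_forall_notMem [Nonempty ι]
    (hW : Pairwise fun i j ↦ Disjoint (W i) (W j)) (hf : IsSpreadIndicator W f) (hα : α ≠ 0)
    (hφ : ∀ k, φ ∉ (W k).dualAnnihilator) :
    hammingNorm (codeword f α φ) =
      (Nat.card K - 1) * Nat.card K ^ (Module.finrank K V - 1) - Fintype.card ι := by
  classical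
  have hφ0 : φ ≠ 0 := by
    rintro rfl
    exact hφ (Classical.arbitrary ι) (Submodule.zero_mem _)
  have key := hammingNorm_codeword_add_card hW hf hα (φ := φ)
  simp only [hφ, filter_false, sum_empty, add_zero, hammingNorm_dual hφ0] at key
  exact Nat.eq_sub_of_add_eq key

lemma hammingNorm_codeword_of_mem (hV : Module.finrank K V = 2 * t)
    (hdim : ∀ k, Module.finrank K (W k) = t) (hW : Pairwise fun i j ↦ Disjoint (W i) (W j))
    (hf : IsSpreadIndicator W f) (hα : α ≠ 0) (hφ0 : φ ≠ 0) {k : ι}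
    (hφ : φ ∈ (W k).dualAnnihilator) :
    hammingNorm (codeword f α φ) =
      (Nat.card K - 1) * Nat.card K ^ (Module.finrank K V - 1) + Nat.card K ^ t
        - Fintype.card ι := by
  classical
  have codisjoint {j : ι} (hj : j ≠ k) : Codisjoint (W j) (W k) := codisjoint_iff.2 <|
    Submodule.eq_top_of_disjoint _ _ (by rw [hdim, hdim, hV, two_mul]) (hW hj)
  have mem_iff (j : ι) : φ ∈ (W j).dualAnnihilator ↔ j = k := by
    refine ⟨fun hj ↦ ?_, fun hj ↦ hj ▸ hφ⟩
    by_contra hjk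
    exact hφ0 (eq_zero_of_mem_dualAnnihilator_of_codisjoint (codisjoint hjk) hj hφ)
  have annihilated : ({j | φ ∈ (W j).dualAnnihilator} : Finset ι) = {k} := by
    ext j
    simp [mem_iff]
  have key := hammingNorm_codeword_add_card hW hf hα (φ := φ)
  rw [annihilated, sum_singleton, hammingNorm_dual hφ0,
    Module.natCard_eq_pow_finrank (K := K) (V := W k), hdim] at key
  exact Nat.eq_sub_of_add_eq key

theorem stmt10_general [Nonempty ι] (hV : Module.finrank K V = 2 * t)
    (hdim : ∀ k, Module.finrank K (W k) = t) (hW : Pairwise fun i j ↦ Disjoint (W i) (W j))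
    (hf : IsSpreadIndicator W f) (α : K) (φ : Module.Dual K V) :
    (α = 0 → φ ≠ 0 →
      hammingNorm (codeword f α φ) = (Nat.card K - 1) * Nat.card K ^ (Module.finrank K V - 1)) ∧
    (α ≠ 0 → φ = 0 →
      hammingNorm (codeword f α φ) = Fintype.card ι * (Nat.card K ^ t - 1)) ∧
    (α ≠ 0 → (∀ k, φ ∉ (W k).dualAnnihilator) →
      hammingNorm (codeword f α φ) =
        (Nat.card K - 1) * Nat.card K ^ (Module.finrank K V - 1) - Fintype.card ι) ∧
    (α ≠ 0 → φ ≠ 0 → (∃ k, φ ∈ (W k).dualAnnihilator) →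
      hammingNorm (codeword f α φ) =
        (Nat.card K - 1) * Nat.card K ^ (Module.finrank K V - 1) + Nat.card K ^ t
          - Fintype.card ι) := by
  refine ⟨?_, ?_, hammingNorm_codeword_of_forall_notMem hW hf, ?_⟩
  · rintro rfl hφ
    rw [hammingNorm_codeword_zero, hammingNorm_dual hφ]
  · rintro hα rfl
    exact hammingNorm_codeword_functional_zero hdim hW hf hα
  · rintro hα hφ0 ⟨k, hφ⟩
    exact hammingNorm_codeword_of_mem hV hdim hW hf hα hφ0 hφ

end Weights

theorem stmt10 (t n s : ℕ) (ht : n = 2 * t) (ht1 : 1 ≤ t) (hs : 1 ≤ s)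
    (W : Fin s → Submodule (ZMod 3) (Fin n → ZMod 3))
    (hdim : ∀ k, Module.finrank (ZMod 3) (W k) = t)
    (hdisj : ∀ i j, i ≠ j → W i ⊓ W j = ⊥)
    (f : (Fin n → ZMod 3) → ZMod 3)
    (hf1 : ∀ (x : Fin n → ZMod 3) (k : Fin s), x ≠ 0 → x ∈ W k → f x = 1)
    (hf0 : ∀ x : Fin n → ZMod 3, (x = 0 ∨ ∀ k, x ∉ W k) → f x = 0)
    :
    ∀ (α : ZMod 3) (w : Fin n → ZMod 3),
      (α = 0 → w ≠ 0 →
        hammingNorm (fun x : {x : Fin n → ZMod 3 // x ≠ 0} => α * f x.1 + w ⬝ᵥ x.1) = 2 * 3 ^ (n - 1)) ∧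
      ((α = 1 ∨ α = 2) → w = 0 →
        hammingNorm (fun x : {x : Fin n → ZMod 3 // x ≠ 0} => α * f x.1 + w ⬝ᵥ x.1) = s * (3 ^ t - 1)) ∧
      ((α = 1 ∨ α = 2) → (∀ k, ∃ x ∈ W k, w ⬝ᵥ x ≠ 0) →
        hammingNorm (fun x : {x : Fin n → ZMod 3 // x ≠ 0} => α * f x.1 + w ⬝ᵥ x.1) = 2 * 3 ^ (n - 1) - s) ∧
      ((α = 1 ∨ α = 2) → w ≠ 0 → (∃ k, ∀ x ∈ W k, w ⬝ᵥ x = 0) →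
        hammingNorm (fun x : {x : Fin n → ZMod 3 // x ≠ 0} => α * f x.1 + w ⬝ᵥ x.1) = 2 * 3 ^ (n - 1) + 3 ^ t - s) := by
  intro α w
  have : Nonempty (Fin s) := ⟨⟨0, hs⟩⟩
  have ne_zero_iff : α ≠ 0 ↔ α = 1 ∨ α = 2 := by
    revert α
    decide
  have weights := stmt10_general (by simpa using ht) hdim
    (fun i j hij ↦ disjoint_iff.2 (hdisj i j hij)) ⟨hf1, hf0⟩ α (dotProductEquiv (ZMod 3) (Fin n) w)
  unfold codeword at weights
  simpa [ne_zero_iff, Submodule.mem_dualAnnihilator] using weights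
end
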